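/- Special case of the balanced truncation error bound for truncating a single state: let A ∈ ℝ^{N×N} be Hurwitz, B ∈ ℝ^{N×p}, L ∈ ℝ^{q×N}, and Σ = diag(σ₁, …, σ_N) with σ₁ ≥ … ≥ σ_N > 0 pairwise distinct, satisfying A·Σ + Σ·Aᵀ = −B·Bᵀ and Aᵀ·Σ + Σ·A = −Lᵀ·L. Let Ã, B̃, L̃ be the blocks of size (N−1) obtained by deleting the last state. Then sup_{ω ∈ ℝ} ‖L(iωI − A)⁻¹B − L̃(iωI − Ã)⁻¹B̃‖ ≤ 2σ_N. -/

import Mathlib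

open Matrix Complex

/-- `A` is Hurwitz if every eigenvalue of `A` over `ℂ` has negative real part. -/
def IsHurwitz {N : ℕ} (A : Matrix (Fin N) (Fin N) ℝ) : Prop :=
  ∀ μ ∈ spectrum ℂ (A.map (Complex.ofReal)), μ.re < 0

/-- The operator norm of a `q × p` complex matrix, viewed as a linear map
between the Euclidean spaces `ℂ^p` and `ℂ^q`. -/
noncomputable def matOpNorm {q p : ℕ} (M : Matrix (Fin q) (Fin p) ℂ) : ℝ :=
  ‖LinearMap.toContinuousLinearMap (Matrix.toEuclideanLin M)‖

/-- Energy identity. -/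
lemma bt_energy {n q : ℕ} (A : Matrix (Fin n) (Fin n) ℂ) (L : Matrix (Fin q) (Fin n) ℂ)
    (σ : Fin n → ℝ) (k : Fin n) (s c : ℂ) (hs : star s = -s)
    (hob : Aᴴ * Matrix.diagonal (fun i => (σ i : ℂ)) + Matrix.diagonal (fun i => (σ i : ℂ)) * A
      = -(Lᴴ * L))
    (w : Fin n → ℂ) (hw : A *ᵥ w = s • w - c • Pi.single k 1) :
    ‖WithLp.toLp 2 (L *ᵥ w)‖ ^ 2 = 2 * σ k * (star c * w k).re := by
  set D := Matrix.diagonal (fun i => (σ i : ℂ)) with hD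
  have h1 : star (L *ᵥ w) ⬝ᵥ (L *ᵥ w) = star w ⬝ᵥ ((Lᴴ * L) *ᵥ w) := by
    rw [star_mulVec, ← dotProduct_mulVec, mulVec_mulVec]
  have h2 : star w ⬝ᵥ ((Lᴴ * L) *ᵥ w)
      = -(star (A *ᵥ w) ⬝ᵥ (D *ᵥ w) + star w ⬝ᵥ (D *ᵥ (A *ᵥ w))) := by
    rw [show Lᴴ * L = -(Aᴴ * D + D * A) by rw [hob, neg_neg], neg_mulVec, dotProduct_neg,
      add_mulVec, dotProduct_add, star_mulVec, ← dotProduct_mulVec, mulVec_mulVec, mulVec_mulVec]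
  have hstar : star (s • w - c • (Pi.single k 1 : Fin n → ℂ))
      = -(s • star w) - star c • (Pi.single k 1 : Fin n → ℂ) := by
    rw [star_sub, star_smul, star_smul, hs, neg_smul]
    congr 2
    ext i
    by_cases h : i = k
    · subst h; simp
    · simp [h]
  have hDw : (D *ᵥ w) k = σ k * w k := by rw [hD, mulVec_diagonal]
  have hDe : D *ᵥ (Pi.single k 1 : Fin n → ℂ) = (σ k : ℂ) • Pi.single k 1 := by
    ext i
    rw [hD, mulVec_diagonal]
    by_cases h : i = k
    · subst h; simp
    · simp [h]
  have h3 : star (L *ᵥ w) ⬝ᵥ (L *ᵥ w) = star c * (σ k * w k) + c * (σ k * star (w k)) := by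
    rw [h1, h2, hw, hstar, mulVec_sub, mulVec_smul, mulVec_smul, hDe]
    simp only [sub_dotProduct, neg_dotProduct, smul_dotProduct, single_dotProduct, hDw,
      dotProduct_sub, dotProduct_smul, dotProduct_single, smul_eq_mul, Pi.star_apply]
    ring
  have h4 : ((‖WithLp.toLp 2 (L *ᵥ w)‖ ^ 2 : ℝ) : ℂ) = star (L *ᵥ w) ⬝ᵥ (L *ᵥ w) := by
    have := @inner_self_eq_norm_sq_to_K ℂ _ _ _ _ (WithLp.toLp 2 (L *ᵥ w))
    rw [EuclideanSpace.inner_eq_star_dotProduct] at this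
    rw [dotProduct_comm, this]
    simp
  have h5 := congrArg Complex.re (h4.trans h3)
  rw [Complex.ofReal_re] at h5
  rw [h5]
  simp
  ring

lemma bt_nonzero {n p q : ℕ} (A : Matrix (Fin n) (Fin n) ℂ) (B : Matrix (Fin n) (Fin p) ℂ)
    (L : Matrix (Fin q) (Fin n) ℂ)
    (σ : Fin n → ℝ) (k : Fin n) (s : ℂ) (hs : star s = -s)
    (hpos : ∀ i, 0 < σ i) (hne : ∀ i, i ≠ k → σ i ≠ σ k)
    (hct : A * Matrix.diagonal (fun i => (σ i : ℂ)) + Matrix.diagonal (fun i => (σ i : ℂ)) * Aᴴ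
      = -(B * Bᴴ))
    (hob : Aᴴ * Matrix.diagonal (fun i => (σ i : ℂ)) + Matrix.diagonal (fun i => (σ i : ℂ)) * A
      = -(Lᴴ * L))
    (hinj : ∀ v : Fin n → ℂ, A *ᵥ v = s • v → v = 0)
    (w : Fin n → ℂ) (hw : A *ᵥ w = s • w - Pi.single k 1) : w k ≠ 0 := by
  intro hk
  set D := Matrix.diagonal (fun i => (σ i : ℂ)) with hD
  have hDe : D *ᵥ (Pi.single k 1 : Fin n → ℂ) = (σ k : ℂ) • Pi.single k 1 := by
    ext i
    rw [hD, mulVec_diagonal]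
    by_cases h : i = k
    · subst h; simp
    · simp [h]
  have hLw : L *ᵥ w = 0 := by
    have := bt_energy A L σ k s 1 hs hob w (by rw [hw, one_smul])
    rw [hk] at this
    simpa using this
  have h1 : Aᴴ *ᵥ (D *ᵥ w) = (-s) • (D *ᵥ w) - (-(σ k : ℂ)) • Pi.single k 1 := by
    have := congrArg (fun M => M *ᵥ w) hob
    simp only [add_mulVec, neg_mulVec, ← mulVec_mulVec, hLw, mulVec_zero, neg_zero, hw] at this
    rw [eq_neg_of_add_eq_zero_left this, mulVec_sub, mulVec_smul, hDe]
    module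
  have hBh : Bᴴ *ᵥ (D *ᵥ w) = 0 := by
    have := bt_energy Aᴴ Bᴴ σ k (-s) (-(σ k : ℂ)) (by rw [star_neg, hs])
      (by rw [conjTranspose_conjTranspose, conjTranspose_conjTranspose]; exact hct) (D *ᵥ w) h1
    have h0 : (D *ᵥ w) k = 0 := by rw [hD, mulVec_diagonal, hk, mul_zero]
    rw [h0] at this
    simpa using this
  have h2 : A *ᵥ (D *ᵥ (D *ᵥ w)) = s • (D *ᵥ (D *ᵥ w)) - ((σ k : ℂ) * σ k) • Pi.single k 1 := by
    have := congrArg (fun M => M *ᵥ (D *ᵥ w)) hct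
    simp only [add_mulVec, neg_mulVec, ← mulVec_mulVec, hBh, mulVec_zero, neg_zero] at this
    rw [h1] at this
    rw [eq_neg_of_add_eq_zero_left this, mulVec_sub, mulVec_smul, mulVec_smul, hDe]
    module
  have h3 : D *ᵥ (D *ᵥ w) - ((σ k : ℂ) * σ k) • w = 0 := by
    apply hinj
    rw [mulVec_sub, mulVec_smul, h2, hw]
    module
  have hw0 : w = 0 := by
    ext i
    by_cases h : i = k
    · subst h; simpa using hk
    · have h4 := congrFun h3 i
      simp only [hD, Pi.sub_apply, mulVec_diagonal, Pi.smul_apply, smul_eq_mul,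
        Pi.zero_apply] at h4
      have h5 : (((σ i - σ k) * (σ i + σ k) : ℝ) : ℂ) * w i = 0 := by
        rw [← h4]; push_cast; ring
      rcases mul_eq_zero.1 h5 with h6 | h6
      · exfalso
        rcases mul_eq_zero.1 (Complex.ofReal_eq_zero.1 h6) with h7 | h7
        · exact hne i h (sub_eq_zero.1 h7)
        · linarith [hpos i, hpos k]
      · simpa using h6
  rw [hw0] at hw
  have := congrFun hw k
  simp at this

lemma bt_main {n p q : ℕ} (A : Matrix (Fin (n+1)) (Fin (n+1)) ℂ)
    (B : Matrix (Fin (n+1)) (Fin p) ℂ)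
    (L : Matrix (Fin q) (Fin (n+1)) ℂ)
    (σ : Fin (n+1) → ℝ) (s : ℂ) (hs : star s = -s)
    (hpos : ∀ i, 0 < σ i) (hne : ∀ i, i ≠ Fin.last n → σ i ≠ σ (Fin.last n))
    (hct : A * Matrix.diagonal (fun i => (σ i : ℂ)) + Matrix.diagonal (fun i => (σ i : ℂ)) * Aᴴ
      = -(B * Bᴴ))
    (hob : Aᴴ * Matrix.diagonal (fun i => (σ i : ℂ)) + Matrix.diagonal (fun i => (σ i : ℂ)) * A
      = -(Lᴴ * L))
    (hu : IsUnit (s • (1 : Matrix (Fin (n+1)) (Fin (n+1)) ℂ) - A)) (u : Fin p → ℂ) :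
    ‖WithLp.toLp 2 ((L * (s • (1 : Matrix (Fin (n+1)) (Fin (n+1)) ℂ) - A)⁻¹ * B -
      L.submatrix id Fin.castSucc * (s • (1 : Matrix (Fin n) (Fin n) ℂ)
        - A.submatrix Fin.castSucc Fin.castSucc)⁻¹ * B.submatrix Fin.castSucc id) *ᵥ u)‖
      ≤ 2 * σ (Fin.last n) * ‖WithLp.toLp 2 u‖ := by
  set k := Fin.last n with hkdef
  set M := s • (1 : Matrix (Fin (n+1)) (Fin (n+1)) ℂ) - A with hM
  set At := A.submatrix (Fin.castSucc : Fin n → Fin (n+1)) Fin.castSucc with hAt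
  set Mt := s • (1 : Matrix (Fin n) (Fin n) ℂ) - At with hMt
  have hdet : IsUnit M.det := (isUnit_iff_isUnit_det _).1 hu
  have hMv : ∀ v, M *ᵥ v = s • v - A *ᵥ v := fun v => by
    rw [hM, sub_mulVec, smul_mulVec, one_mulVec]
  have hMinj : ∀ v v', M *ᵥ v = M *ᵥ v' → v = v' := by
    intro v v' h
    have := congrArg (fun x => M⁻¹ *ᵥ x) h
    simpa [mulVec_mulVec, nonsing_inv_mul _ hdet] using this
  have hinj : ∀ v : Fin (n+1) → ℂ, A *ᵥ v = s • v → v = 0 := by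
    intro v hv
    apply hMinj
    rw [hMv, hv, sub_self, mulVec_zero]
  -- the vector w
  obtain ⟨w, hw⟩ : ∃ w, M *ᵥ w = Pi.single k 1 :=
    ⟨M⁻¹ *ᵥ Pi.single k 1, by rw [mulVec_mulVec, mul_nonsing_inv _ hdet, one_mulVec]⟩
  have hwA : A *ᵥ w = s • w - Pi.single k 1 := by rw [← hw, hMv]; abel
  have hwk : w k ≠ 0 := bt_nonzero A B L σ k s hs hpos hne hct hob hinj w hwA
  have hstarsingle : star (Pi.single k 1 : Fin (n+1) → ℂ) = Pi.single k 1 := by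
    ext i
    by_cases h : i = k
    · subst h; simp
    · simp [h]
  -- the dual vector y
  have hdetH : IsUnit Mᴴ.det := by rw [det_conjTranspose]; exact hdet.star
  obtain ⟨y, hy⟩ : ∃ y, Mᴴ *ᵥ y = Pi.single k 1 :=
    ⟨Mᴴ⁻¹ *ᵥ Pi.single k 1, by rw [mulVec_mulVec, mul_nonsing_inv _ hdetH, one_mulVec]⟩
  have hyA : Aᴴ *ᵥ y = (-s) • y - (1 : ℂ) • Pi.single k 1 := by
    rw [← hy, hM, conjTranspose_sub, conjTranspose_smul, conjTranspose_one, hs, sub_mulVec,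
      smul_mulVec, one_mulVec]
    module
  have hyM : ∀ v, star y ⬝ᵥ (M *ᵥ v) = v k := by
    intro v
    have h := congrArg star hy
    rw [star_mulVec, conjTranspose_conjTranspose, hstarsingle] at h
    rw [dotProduct_mulVec, h, single_dotProduct, one_mul]
  have hyw : star (y k) = w k := by
    rw [← hyM w, hw, dotProduct_single, mul_one, Pi.star_apply]
  -- extension
  have hext : ∀ v : Fin n → ℂ, ∀ i : Fin n,
      (M *ᵥ (Fin.snoc v 0 : Fin (n+1) → ℂ)) (Fin.castSucc i) = (Mt *ᵥ v) i := by
    intro v i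
    rw [hMv, hMt, sub_mulVec, smul_mulVec, one_mulVec]
    simp [mulVec, dotProduct, Fin.sum_univ_castSucc, hAt]
  have hMtinj : ∀ v, Mt *ᵥ v = 0 → v = 0 := by
    intro v hv
    set z : Fin (n+1) → ℂ := Fin.snoc v 0 with hz
    have h1 : z = (M *ᵥ z) k • w := by
      apply hMinj
      rw [mulVec_smul, hw]
      ext i
      refine Fin.lastCases ?_ (fun i => ?_) i
      · simp [hkdef]
      · rw [hz, hext, hv]; simp [hkdef]
    have h2 : (M *ᵥ z) k = 0 := by
      have := congrFun h1 k
      have hzk : z k = 0 := by simp [hz, hkdef]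
      rw [hzk] at this
      simpa [hwk] using this.symm
    rw [h2, zero_smul] at h1
    ext i
    have := congrFun h1 (Fin.castSucc i)
    simpa [hz] using this
  have hdett : IsUnit Mt.det := by
    rw [← isUnit_iff_isUnit_det, ← mulVec_injective_iff_isUnit]
    intro a b hab
    have : Mt *ᵥ (a - b) = 0 := by rw [mulVec_sub]; exact sub_eq_zero.2 hab
    exact sub_eq_zero.1 (hMtinj _ this)
  set x := M⁻¹ *ᵥ (B *ᵥ u) with hx
  set xt := Mt⁻¹ *ᵥ (B.submatrix Fin.castSucc id *ᵥ u) with hxt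
  set z : Fin (n+1) → ℂ := Fin.snoc xt 0 with hz
  have hMx : M *ᵥ x = B *ᵥ u := by rw [hx, mulVec_mulVec, mul_nonsing_inv _ hdet, one_mulVec]
  have hMxt : Mt *ᵥ xt = B.submatrix Fin.castSucc id *ᵥ u := by
    rw [hxt, mulVec_mulVec, mul_nonsing_inv _ hdett, one_mulVec]
  obtain ⟨β, hβ⟩ : ∃ β : ℂ, x - z = β • w := by
    refine ⟨(M *ᵥ (x - z)) k, hMinj _ _ ?_⟩
    rw [mulVec_smul, hw]
    ext i
    refine Fin.lastCases ?_ (fun i => ?_) i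
    · simp [hkdef]
    · rw [mulVec_sub, hMx, Pi.sub_apply, hz, hext, hMxt]
      simp [hkdef, mulVec, dotProduct]
  have hLz : L *ᵥ z = L.submatrix id Fin.castSucc *ᵥ xt := by
    ext i
    simp [mulVec, dotProduct, Fin.sum_univ_castSucc, hz]
  have herr : (L * M⁻¹ * B - L.submatrix id Fin.castSucc * Mt⁻¹ * B.submatrix Fin.castSucc id) *ᵥ u
      = β • (L *ᵥ w) := by
    rw [← mulVec_smul, ← hβ, mulVec_sub, hLz, sub_mulVec]
    simp only [← mulVec_mulVec, hx, hxt]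
  have hxk : x k = β * w k := by
    have := congrFun hβ k
    have hzk : z k = 0 := by simp [hz, hkdef]
    simpa [hzk] using this
  have hxin : x k = inner ℂ (WithLp.toLp 2 (Bᴴ *ᵥ y)) (WithLp.toLp 2 u) := by
    rw [EuclideanSpace.inner_eq_star_dotProduct, ← hyM x, hMx, dotProduct_comm u, star_mulVec,
      conjTranspose_conjTranspose, dotProduct_mulVec]
  have hcs : ‖β‖ * ‖w k‖ ≤ ‖WithLp.toLp 2 (Bᴴ *ᵥ y)‖ * ‖WithLp.toLp 2 u‖ := by
    rw [← norm_mul, ← hxk, hxin]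
    exact norm_inner_le_norm _ _
  have hE1 := bt_energy A L σ k s 1 hs hob w (by rw [hwA, one_smul])
  have hE2 := bt_energy Aᴴ Bᴴ σ k (-s) 1 (by rw [star_neg, hs])
      (by rw [conjTranspose_conjTranspose, conjTranspose_conjTranspose]; exact hct) y hyA
  rw [star_one, one_mul] at hE1 hE2
  have hyre : (y k).re ≤ ‖w k‖ := by
    rw [← hyw, norm_star]; exact Complex.re_le_norm _
  have hwre : (w k).re ≤ ‖w k‖ := Complex.re_le_norm _
  rw [herr, WithLp.toLp_smul, norm_smul]
  have hwpos : 0 < ‖w k‖ := norm_pos_iff.2 hwk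
  have hσ := hpos k
  have ha0 := norm_nonneg (WithLp.toLp 2 (L *ᵥ w))
  have hb0 := norm_nonneg (WithLp.toLp 2 (Bᴴ *ᵥ y))
  have hu0 := norm_nonneg (WithLp.toLp 2 u)
  generalize ‖WithLp.toLp 2 (L *ᵥ w)‖ = a at *
  generalize ‖WithLp.toLp 2 (Bᴴ *ᵥ y)‖ = b at *
  generalize ‖WithLp.toLp 2 u‖ = c at *
  have hab : a * b ≤ 2 * σ k * ‖w k‖ := by
    have h1 : a ^ 2 ≤ 2 * σ k * ‖w k‖ := by rw [hE1]; gcongr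
    have h2 : b ^ 2 ≤ 2 * σ k * ‖w k‖ := by rw [hE2]; gcongr
    nlinarith [sq_nonneg (a - b)]
  have : (‖β‖ * a) * ‖w k‖ ≤ (2 * σ k * c) * ‖w k‖ := by
    calc (‖β‖ * a) * ‖w k‖ = a * (‖β‖ * ‖w k‖) := by ring
      _ ≤ a * (b * c) := by gcongr
      _ = (a * b) * c := by ring
      _ ≤ (2 * σ k * ‖w k‖) * c := by gcongr
      _ = _ := by ring
  exact le_of_mul_le_mul_right this hwpos

/-- One-step balanced truncation error bound: for a stable
balanced realization `(A, B, L)` with Gramians `Σ = diag(σ₁ > … > σ_N > 0)`,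
deleting the last state gives a reduced model `(Ã, B̃, L̃)` with
`‖L(iωI − A)⁻¹B − L̃(iωI − Ã)⁻¹B̃‖ ≤ 2σ_N` for every real `ω`. -/
theorem balanced_truncation_one_step_error_bound {N p q : ℕ} (hN : 0 < N)
    (A : Matrix (Fin N) (Fin N) ℝ) (hA : IsHurwitz A)
    (B : Matrix (Fin N) (Fin p) ℝ) (L : Matrix (Fin q) (Fin N) ℝ)
    (σ : Fin N → ℝ) (hmono : StrictAnti σ) (hpos : ∀ i, 0 < σ i)
    (hctrb : A * Matrix.diagonal σ + Matrix.diagonal σ * Aᵀ = -(B * Bᵀ))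
    (hobsv : Aᵀ * Matrix.diagonal σ + Matrix.diagonal σ * A = -(Lᵀ * L)) :
    letI h : N - 1 ≤ N := Nat.sub_le N 1
    letI At := A.submatrix (Fin.castLE h) (Fin.castLE h)
    letI Bt := B.submatrix (Fin.castLE h) id
    letI Lt := L.submatrix id (Fin.castLE h)
    ∀ ω : ℝ,
      matOpNorm
        (L.map ofReal *
            ((Complex.I * ω) • (1 : Matrix (Fin N) (Fin N) ℂ)
              - A.map ofReal)⁻¹ * B.map ofReal -
          Lt.map ofReal *
            ((Complex.I * ω) • (1 : Matrix (Fin (N - 1)) (Fin (N - 1)) ℂ)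
              - At.map ofReal)⁻¹ * Bt.map ofReal)
        ≤ 2 * σ ⟨N - 1, Nat.sub_lt hN one_pos⟩ := by
  obtain ⟨n, rfl⟩ : ∃ n, N = n + 1 := ⟨N - 1, by omega⟩
  intro ω
  have hmapT : ∀ {a b : ℕ} (X : Matrix (Fin a) (Fin b) ℝ),
      (X.map ofReal)ᴴ = Xᵀ.map ofReal := by
    intro a b X
    ext i j
    simp
  have hmm : ∀ {a b c : ℕ} (X : Matrix (Fin a) (Fin b) ℝ) (Y : Matrix (Fin b) (Fin c) ℝ),
      (X * Y).map ofReal = X.map ofReal * Y.map ofReal := by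
    intro a b c X Y
    exact Matrix.map_mul (f := Complex.ofRealHom)
  have hdiag : (Matrix.diagonal σ).map ofReal = Matrix.diagonal (fun i => (σ i : ℂ)) :=
    Matrix.diagonal_map Complex.ofReal_zero
  have hs : star (Complex.I * (ω : ℂ)) = -(Complex.I * (ω : ℂ)) := by
    simp
  have hct : A.map ofReal * Matrix.diagonal (fun i => (σ i : ℂ))
      + Matrix.diagonal (fun i => (σ i : ℂ)) * (A.map ofReal)ᴴ
      = -(B.map ofReal * (B.map ofReal)ᴴ) := by
    rw [hmapT, hmapT, ← hdiag, ← hmm, ← hmm, ← hmm]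
    ext i j
    have := congrArg (fun X : Matrix (Fin (n+1)) (Fin (n+1)) ℝ => (X i j : ℂ)) hctrb
    simpa only [Matrix.add_apply, Matrix.neg_apply, Matrix.map_apply, Complex.ofReal_add,
      Complex.ofReal_neg] using this
  have hob : (A.map ofReal)ᴴ * Matrix.diagonal (fun i => (σ i : ℂ))
      + Matrix.diagonal (fun i => (σ i : ℂ)) * A.map ofReal
      = -((L.map ofReal)ᴴ * L.map ofReal) := by
    rw [hmapT, hmapT, ← hdiag, ← hmm, ← hmm, ← hmm]
    ext i j
    have := congrArg (fun X : Matrix (Fin (n+1)) (Fin (n+1)) ℝ => (X i j : ℂ)) hobsv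
    simpa only [Matrix.add_apply, Matrix.neg_apply, Matrix.map_apply, Complex.ofReal_add,
      Complex.ofReal_neg] using this
  have hu : IsUnit ((Complex.I * (ω : ℂ)) • (1 : Matrix (Fin (n+1)) (Fin (n+1)) ℂ)
      - A.map ofReal) := by
    by_contra hcon
    have hmem : (Complex.I * (ω : ℂ)) ∈ spectrum ℂ (A.map ofReal) := by
      rw [spectrum.mem_iff, Algebra.algebraMap_eq_smul_one]
      exact hcon
    have := hA _ hmem
    simp at this
  have key := bt_main (A.map ofReal) (B.map ofReal) (L.map ofReal) σ (Complex.I * (ω : ℂ)) hs hpos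
    (fun i hi h => hi (hmono.injective h)) hct hob hu
  refine ContinuousLinearMap.opNorm_le_bound _ (by have := hpos (Fin.last n); positivity) ?_
  intro v
  exact key v.ofLp
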